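/- arXiv:1404.1506 — 2 statements merged into one kernel-verified Lean document; each statement's English description precedes it below -/
import Mathlib

section
/- (CSM-S in the presence of noise.) Let X ∈ ℝ^{N₁×N₂} be k-sparse and let U₁ ∈ ℝ^{m₁×N₁}, U₂ ∈ ℝ^{m₂×N₂} each satisfy the restricted isometry property of order 2k (RIP_{2k}) with constant δ_{2k} ∈ (0, √2 − 1); set C₂ = 4√(1+δ_{2k}) / (1 − (1+√2)δ_{2k}). Let Y = U₁XU₂ᵀ + E with ‖E‖_F ≤ ε. For each i ∈ {1,…,m₂}, let ẑ_i be a minimizer of ‖z‖₁ over all z ∈ ℝ^{N₁} with ‖c_i(Y) − U₁z‖₂ ≤ ε, where c_i(Y) is the i-th column of Y, and let Z ∈ ℝ^{N₁×m₂} have columns ẑ₁,…,ẑ_{m₂}. Then ‖Z − XU₂ᵀ‖_F ≤ √m₂·C₂·ε. Further, for each j ∈ {1,…,N₁}, let û_j be a minimizer of ‖u‖₁ over all u ∈ ℝ^{N₂} with ‖c_j(Zᵀ) − U₂u‖₂ ≤ √m₂·C₂·ε, and let X̂ ∈ ℝ^{N₁×N₂} have rows û₁ᵀ,…,û_{N₁}ᵀ.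 Then ‖X̂ − X‖_F ≤ √(m₂N₁)·C₂²·ε. -/
/-! The heart of the matter is Candès' stable recovery theorem (`stable_recovery`): if `x` is
`k`-sparse, `A` satisfies RIP of order `2k` with `δ < √2 - 1`, and `z` minimises the `ℓ¹` norm among
vectors whose image under `A` lies within `ε` of `y`, where `‖y - A x‖ ≤ ε`, then
`‖z - x‖ ≤ C ε` with `C = 4 √(1 + δ) / (1 - (1 + √2) δ)`.

For its proof let `h = z - x` and let `T₀` be the support of `x`.  Minimality gives the cone condition
`‖h‖₁ off T₀ ≤ ‖h‖₁ on T₀`.  Let `T₁` collect the `k` largest entries of `h` off `T₀` and let `R` be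
the remaining indices.  Polarising the RIP makes images of disjointly supported `k`-sparse vectors
almost orthogonal (`rip_inner`); peeling `R` into blocks of decreasing magnitude
(`exists_top_block`, `rip_inner_tail`) bounds the inner product of the images of `h_{T₀ ∪ T₁}` and
`h_R` by `√2 δ ‖h_{T₀ ∪ T₁}‖²`.  Together with `‖A h‖ ≤ 2 ε` this controls `h_{T₀ ∪ T₁}`, and the
cone condition controls `h_R` by `h_{T₀}`.

For the theorem, each column of `X U₂ᵀ` is `k`-sparse because it vanishes wherever a row of `X` does,
and each column of `E` has norm at most `ε`, so stable recovery applies columnwise with `U₁`.  Each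
row of `X` is `k`-sparse and each row of `Z` is within `√m₂ C₂ ε` of the corresponding row of
`X U₂ᵀ` by the Frobenius bound, so it applies rowwise with `U₂`.  Summing squares gives both
estimates. -/

open Matrix Finset

/-- A vector `x ∈ ℝ^N` is `k`-sparse if it has at most `k` nonzero entries. -/
def SparseVec {N : ℕ} (k : ℕ) (x : Fin N → ℝ) : Prop :=
  (Finset.univ.filter fun i => x i ≠ 0).card ≤ k

/-- A matrix `X` is `k`-sparse if it has at most `k` nonzero entries in total. -/
def SparseMat {N₁ N₂ : ℕ} (k : ℕ) (X : Matrix (Fin N₁) (Fin N₂) ℝ) : Prop :=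
  (Finset.univ.filter fun p : Fin N₁ × Fin N₂ => X p.1 p.2 ≠ 0).card ≤ k

/-- The Euclidean (`ℓ²`) norm of a vector. -/
noncomputable def norm2 {N : ℕ} (x : Fin N → ℝ) : ℝ :=
  Real.sqrt (∑ i, (x i) ^ 2)

/-- The Frobenius norm of a matrix. -/
noncomputable def normF {N₁ N₂ : ℕ} (X : Matrix (Fin N₁) (Fin N₂) ℝ) : ℝ :=
  Real.sqrt (∑ p, ∑ q, (X p q) ^ 2)

/-- `A` satisfies the restricted isometry property of order `k` with constant `δ`. -/
def RIP {m N : ℕ} (k : ℕ) (δ : ℝ) (A : Matrix (Fin m) (Fin N) ℝ) : Prop :=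
  ∀ x : Fin N → ℝ, SparseVec k x →
    (1 - δ) * (∑ i, (x i) ^ 2) ≤ (∑ j, (A.mulVec x j) ^ 2) ∧
    (∑ j, (A.mulVec x j) ^ 2) ≤ (1 + δ) * (∑ i, (x i) ^ 2)

/-! ### Euclidean norms and restrictions -/

/-- The restriction of `v` to the index set `S`, extended by zero. -/
def restr {N : ℕ} (S : Finset (Fin N)) (v : Fin N → ℝ) : Fin N → ℝ :=
  fun i => if i ∈ S then v i else 0

lemma le_of_sq_le {a b : ℝ} (h : a ^ 2 ≤ b ^ 2) (hb : 0 ≤ b) : a ≤ b :=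
  (abs_le_of_sq_le_sq' h hb).2

lemma norm2_nonneg {N : ℕ} (x : Fin N → ℝ) : 0 ≤ norm2 x := Real.sqrt_nonneg _

lemma norm2_sq {N : ℕ} (x : Fin N → ℝ) : norm2 x ^ 2 = ∑ i, x i ^ 2 :=
  Real.sq_sqrt (Finset.sum_nonneg fun _ _ => sq_nonneg _)

lemma norm2_sq_dot {N : ℕ} (x : Fin N → ℝ) : norm2 x ^ 2 = x ⬝ᵥ x := by
  rw [norm2_sq]; simp [dotProduct, sq]

lemma dot_le_norm2 {N : ℕ} (x y : Fin N → ℝ) : x ⬝ᵥ y ≤ norm2 x * norm2 y := by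
  refine abs_le_of_sq_le_sq' ?_ (mul_nonneg (norm2_nonneg x) (norm2_nonneg y)) |>.2
  rw [mul_pow, norm2_sq, norm2_sq]
  exact sum_mul_sq_le_sq_mul_sq univ x y

lemma norm2_restr_sq {N : ℕ} (S : Finset (Fin N)) (v : Fin N → ℝ) :
    norm2 (restr S v) ^ 2 = ∑ i ∈ S, v i ^ 2 := by
  rw [norm2_sq]; simp [restr, ite_pow, Finset.sum_ite_mem]

lemma sparse_restr {N k : ℕ} {S : Finset (Fin N)} (v : Fin N → ℝ) (h : S.card ≤ k) :
    SparseVec k (restr S v) := by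
  refine (Finset.card_le_card fun i hi => ?_).trans h
  by_contra hS
  simp [restr, hS] at hi

lemma restr_add_of_disjoint {N : ℕ} {S T : Finset (Fin N)} (h : Disjoint S T) (v : Fin N → ℝ) :
    restr (S ∪ T) v = restr S v + restr T v := by
  ext i
  have : i ∈ S → i ∉ T := fun hi => Finset.disjoint_left.1 h hi
  by_cases h1 : i ∈ S <;> by_cases h2 : i ∈ T <;> simp_all [restr]

lemma restr_mul_restr {N : ℕ} {S T : Finset (Fin N)} (h : Disjoint S T) (v w : Fin N → ℝ)
    (i : Fin N) : restr S v i * restr T w i = 0 := by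
  have : i ∈ S → i ∉ T := fun hi => Finset.disjoint_left.1 h hi
  by_cases h1 : i ∈ S <;> by_cases h2 : i ∈ T <;> simp_all [restr]

/-! ### Restricted isometry and near-orthogonality -/

lemma rip_norm2 {m N k : ℕ} {δ : ℝ} {A : Matrix (Fin m) (Fin N) ℝ} (hA : RIP k δ A)
    {x : Fin N → ℝ} (hx : SparseVec k x) :
    (1 - δ) * norm2 x ^ 2 ≤ norm2 (A *ᵥ x) ^ 2 ∧
      norm2 (A *ᵥ x) ^ 2 ≤ (1 + δ) * norm2 x ^ 2 := by
  simpa only [norm2_sq] using hA x hx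

lemma norm2_add_smul_sq {N : ℕ} (u v : Fin N → ℝ) (t : ℝ) :
    norm2 (u + t • v) ^ 2 = norm2 u ^ 2 + 2 * t * (u ⬝ᵥ v) + t ^ 2 * norm2 v ^ 2 := by
  simp only [norm2_sq_dot, dotProduct_add, add_dotProduct, smul_dotProduct, dotProduct_smul,
    smul_eq_mul, dotProduct_comm v u]
  ring

/-- Matrices with the RIP nearly preserve orthogonality of disjointly supported sparse vectors. -/
lemma rip_inner {m N k : ℕ} {δ : ℝ} (hδ : 0 ≤ δ) {A : Matrix (Fin m) (Fin N) ℝ}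
    (hA : RIP (2 * k) δ A) {u v : Fin N → ℝ} (hu : SparseVec k u) (hv : SparseVec k v)
    (huv : ∀ i, u i * v i = 0) :
    |(A *ᵥ u) ⬝ᵥ (A *ᵥ v)| ≤ δ * norm2 u * norm2 v := by
  have hsp : ∀ t : ℝ, SparseVec (2 * k) (u + t • v) := fun t => by
    unfold SparseVec at *
    have hsub : (univ.filter fun i => (u + t • v) i ≠ 0) ⊆
        (univ.filter fun i => u i ≠ 0) ∪ univ.filter fun i => v i ≠ 0 := by
      intro i hi
      by_contra hc
      simp only [mem_union, mem_filter, mem_univ, true_and, not_or, not_not] at hc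
      simp [hc.1, hc.2] at hi
    have := (card_le_card hsub).trans (card_union_le _ _)
    omega
  have h0 : u ⬝ᵥ v = 0 := Finset.sum_eq_zero fun i _ => huv i
  set c := (A *ᵥ u) ⬝ᵥ (A *ᵥ v) with hc
  -- polarisation with a free scaling parameter `t`; the discriminant then gives the sharp bound
  have key : ∀ t : ℝ, 0 ≤ (δ * norm2 v ^ 2) * (t * t) + (-2 * c) * t + δ * norm2 u ^ 2 := by
    intro t
    have h1 := (rip_norm2 hA (hsp t)).2
    have h2 := (rip_norm2 hA (hsp (-t))).1
    simp only [mulVec_add, mulVec_smul, norm2_add_smul_sq, h0, ← hc] at h1 h2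
    nlinarith
  have hd := discrim_le_zero key
  unfold discrim at hd
  apply abs_le_of_sq_le_sq ?_ (mul_nonneg (mul_nonneg hδ (norm2_nonneg u)) (norm2_nonneg v))
  nlinarith

lemma exists_largest {N : ℕ} (v : Fin N → ℝ) (S : Finset (Fin N)) (k : ℕ) (hk : k ≤ S.card) :
    ∃ T ⊆ S, T.card = k ∧ ∀ i ∈ T, ∀ j ∈ S \ T, |v j| ≤ |v i| := by
  induction k with
  | zero => exact ⟨∅, by simp, by simp, by simp⟩
  | succ k ih =>
    obtain ⟨T, hTS, hcard, hT⟩ := ih (by omega)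
    have hne : (S \ T).Nonempty := by
      rw [← card_pos, card_sdiff_of_subset hTS]; omega
    obtain ⟨a, ha, hmax⟩ := exists_max_image (S \ T) (fun i => |v i|) hne
    have ha' := mem_sdiff.1 ha
    refine ⟨insert a T, insert_subset ha'.1 hTS, by rw [card_insert_of_notMem ha'.2, hcard], ?_⟩
    intro i hi j hj
    have hj' : j ∈ S \ T := by
      simp only [mem_sdiff, mem_insert, not_or] at hj ⊢
      exact ⟨hj.1, hj.2.2⟩
    rcases mem_insert.1 hi with rfl | hi
    · exact hmax j hj'
    · exact hT i hi j hj'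

/-- A block `T` of at most `k` entries of `S` of largest magnitude, with a threshold `M` separating
it from the rest.  If `S` has at most `k` elements, then `T = S` and `M = 0` serve. -/
lemma exists_top_block {N k : ℕ} (hk : 0 < k) (v : Fin N → ℝ) (S : Finset (Fin N)) :
    ∃ T ⊆ S, T.card ≤ k ∧ (S.Nonempty → T.Nonempty) ∧ ∃ M : ℝ, 0 ≤ M ∧
      (k : ℝ) * M ≤ ∑ i ∈ T, |v i| ∧ ∀ i ∈ S \ T, |v i| ≤ M := by
  rcases le_total S.card k with h | h
  · exact ⟨S, subset_rfl, h, id, 0, le_rfl,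
      by simpa using sum_nonneg fun i _ => abs_nonneg (v i), by simp⟩
  · obtain ⟨T, hTS, hcard, hT⟩ := exists_largest v S k h
    have hne : T.Nonempty := by rw [← card_pos]; omega
    obtain ⟨a, ha, hmin⟩ := exists_min_image T (fun i => |v i|) hne
    refine ⟨T, hTS, hcard.le, fun _ => hne, |v a|, abs_nonneg _, ?_, fun i hi => hT a ha i hi⟩
    have := card_nsmul_le_sum T (fun i => |v i|) _ hmin
    rwa [hcard, nsmul_eq_mul] at this

/-- The inner product of `A w` with the image of a vector that need not be sparse: the vector is
peeled into blocks of decreasing magnitude, and the `ℓ²` norm of each block is at most `k^{-1/2}`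
times the `ℓ¹` norm of the preceding one, and at most `√k M` for the first block. -/
lemma rip_inner_tail {m N k : ℕ} (hk : 0 < k) {δ : ℝ} (hδ : 0 ≤ δ) {A : Matrix (Fin m) (Fin N) ℝ}
    (hA : RIP (2 * k) δ A) {w : Fin N → ℝ} (hw : SparseVec k w) (v : Fin N → ℝ)
    (S : Finset (Fin N)) : (∀ i ∈ S, w i = 0) → ∀ M : ℝ, 0 ≤ M → (∀ i ∈ S, |v i| ≤ M) →
      √k * |(A *ᵥ w) ⬝ᵥ (A *ᵥ restr S v)| ≤ δ * norm2 w * (k * M + ∑ i ∈ S, |v i|) := by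
  induction S using Finset.strongInduction with
  | H S ih =>
    intro hwS M hM hvM
    have hdw : 0 ≤ δ * norm2 w := mul_nonneg hδ (norm2_nonneg w)
    rcases S.eq_empty_or_nonempty with rfl | hS
    · have : restr ∅ v = 0 := by ext; simp [restr]
      simp only [this, mulVec_zero, dotProduct_zero, abs_zero, mul_zero, sum_empty, add_zero]
      positivity
    obtain ⟨T, hTS, hcard, hTne, M', hM', hkM', hrest⟩ := exists_top_block hk v S
    have hdisj : Disjoint T (S \ T) := disjoint_sdiff
    have hsplit : restr S v = restr T v + restr (S \ T) v := by
      rw [← restr_add_of_disjoint hdisj, union_sdiff_of_subset hTS]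
    have hsum : ∑ i ∈ S, |v i| = ∑ i ∈ T, |v i| + ∑ i ∈ S \ T, |v i| := by
      rw [add_comm, sum_sdiff hTS]
    have hr := ih (S \ T) (sdiff_ssubset hTS (hTne hS)) (fun i hi => hwS i (mem_sdiff.1 hi).1) M'
      hM' hrest
    have hT : norm2 (restr T v) ≤ √k * M := by
      refine le_of_sq_le ?_ (by positivity)
      rw [norm2_restr_sq, mul_pow, Real.sq_sqrt (Nat.cast_nonneg k)]
      calc ∑ i ∈ T, v i ^ 2 ≤ T.card • M ^ 2 := sum_le_card_nsmul _ _ _ fun i hi =>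
            sq_le_sq' (neg_le_of_abs_le (hvM i (hTS hi))) (le_of_abs_le (hvM i (hTS hi)))
        _ ≤ k * M ^ 2 := by rw [nsmul_eq_mul]; gcongr
    have hi := rip_inner hδ hA hw (sparse_restr v hcard) (fun i => by
      by_cases h : i ∈ T
      · rw [hwS i (hTS h), zero_mul]
      · simp [restr, h])
    rw [hsplit, mulVec_add, dotProduct_add, hsum]
    have habs := abs_add_le ((A *ᵥ w) ⬝ᵥ (A *ᵥ restr T v)) ((A *ᵥ w) ⬝ᵥ (A *ᵥ restr (S \ T) v))
    have hsq : √(k : ℝ) * √k = k := Real.mul_self_sqrt (Nat.cast_nonneg k)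
    have h1 : √k * |(A *ᵥ w) ⬝ᵥ (A *ᵥ restr T v)| ≤ δ * norm2 w * (k * M) := by
      calc √k * |(A *ᵥ w) ⬝ᵥ (A *ᵥ restr T v)| ≤ √k * (δ * norm2 w * (√k * M)) := by
            gcongr
            exact hi.trans (by gcongr)
        _ = δ * norm2 w * ((√k * √k) * M) := by ring
        _ = _ := by rw [hsq]
    have h2 := mul_le_mul_of_nonneg_left hkM' hdw
    have h3 := mul_le_mul_of_nonneg_left habs (Real.sqrt_nonneg (k : ℝ))
    nlinarith

/-! ### Stable recovery by `ℓ¹` minimisation -/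

/-- The error of an `ℓ¹` minimiser is concentrated on the support of the sparse signal. -/
lemma cone_condition {N : ℕ} (x z : Fin N → ℝ) (T : Finset (Fin N)) (hT : ∀ i ∉ T, x i = 0)
    (hmin : ∑ i, |z i| ≤ ∑ i, |x i|) :
    ∑ i ∈ Tᶜ, |(z - x) i| ≤ ∑ i ∈ T, |(z - x) i| := by
  have h1 : ∑ i ∈ Tᶜ, |(z - x) i| = ∑ i ∈ Tᶜ, |z i| :=
    sum_congr rfl fun i hi => by simp [hT i (mem_compl.1 hi)]
  have h2 : ∑ i ∈ Tᶜ, |x i| = 0 := sum_eq_zero fun i hi => by simp [hT i (mem_compl.1 hi)]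
  have h3 : ∑ i ∈ T, |x i| ≤ ∑ i ∈ T, |z i| + ∑ i ∈ T, |(z - x) i| := by
    rw [← sum_add_distrib]
    refine sum_le_sum fun i _ => ?_
    have := abs_sub_abs_le_abs_sub (x i) (z i)
    rw [abs_sub_comm] at this
    simp only [Pi.sub_apply]
    linarith
  rw [← sum_add_sum_compl T, ← sum_add_sum_compl T fun i => |x i|] at hmin
  linarith

lemma norm2_sub_le_two {N : ℕ} {a b : Fin N → ℝ} {ε : ℝ} (hε : 0 ≤ ε) (ha : norm2 a ≤ ε)
    (hb : norm2 b ≤ ε) : norm2 (a - b) ≤ 2 * ε := by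
  refine le_of_sq_le ?_ (by positivity)
  have h1 : norm2 (a - b) ^ 2 ≤ 2 * norm2 a ^ 2 + 2 * norm2 b ^ 2 := by
    simp only [norm2_sq, mul_sum, ← sum_add_distrib]
    exact sum_le_sum fun i _ => by simp only [Pi.sub_apply]; nlinarith [sq_nonneg (a i + b i)]
  have := norm2_nonneg a
  have := norm2_nonneg b
  nlinarith

lemma denom_pos {δ : ℝ} (hδ₁ : δ < √2 - 1) : 0 < 1 - (1 + √2) * δ := by
  have h2 : √2 * √2 = (2 : ℝ) := Real.mul_self_sqrt (by norm_num)
  have : (0 : ℝ) ≤ √2 := Real.sqrt_nonneg 2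
  nlinarith

set_option maxHeartbeats 1000000 in
/-- Stable recovery of sparse vectors by `ℓ¹` minimisation. -/
lemma stable_recovery {m N k : ℕ} {δ ε : ℝ} (hδ₀ : 0 < δ) (hδ₁ : δ < √2 - 1) (hε : 0 ≤ ε)
    {A : Matrix (Fin m) (Fin N) ℝ} (hA : RIP (2 * k) δ A) {x z : Fin N → ℝ} (hx : SparseVec k x)
    {y : Fin m → ℝ} (hxy : norm2 (y - A *ᵥ x) ≤ ε) (hzy : norm2 (y - A *ᵥ z) ≤ ε)
    (hmin : ∑ i, |z i| ≤ ∑ i, |x i|) :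
    norm2 (z - x) ≤ 4 * √(1 + δ) / (1 - (1 + √2) * δ) * ε := by
  have hD := denom_pos hδ₁
  have hδ₂ : 0 ≤ δ := hδ₀.le
  set T₀ := univ.filter fun i => x i ≠ 0 with hT₀
  have hcard₀ : T₀.card ≤ k := hx
  have hcone := cone_condition x z T₀ (fun i hi => by simpa [hT₀] using hi) hmin
  set h := z - x with hh
  rcases Nat.eq_zero_or_pos k with rfl | hk
  · -- then `x = 0`, and minimality forces `z = 0`
    have hT : T₀ = ∅ := card_eq_zero.1 (Nat.le_zero.1 hcard₀)
    rw [hT, compl_empty, sum_empty] at hcone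
    have hz : h = 0 := by
      ext i
      have := (sum_eq_zero_iff_of_nonneg fun i _ => abs_nonneg (h i)).1
        (le_antisymm hcone (sum_nonneg fun i _ => abs_nonneg (h i))) i (mem_univ i)
      simpa using this
    have : norm2 h = 0 := by simp [hz, norm2]
    rw [this]
    positivity
  obtain ⟨T₁, hT₁, hcard₁, -, M, hM, hkM, hrest⟩ := exists_top_block hk h T₀ᶜ
  set R := T₀ᶜ \ T₁ with hR
  have hd01 : Disjoint T₀ T₁ :=
    disjoint_left.2 fun i h0 h1 => mem_compl.1 (hT₁ h1) h0
  have hd0R : Disjoint T₀ R :=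
    disjoint_left.2 fun i h0 h1 => mem_compl.1 (mem_sdiff.1 h1).1 h0
  have hd1R : Disjoint T₁ R := disjoint_sdiff
  have hcompl : ∑ i ∈ T₀ᶜ, |h i| = ∑ i ∈ T₁, |h i| + ∑ i ∈ R, |h i| := by
    rw [add_comm, hR, sum_sdiff hT₁]
  set h0 := restr T₀ h
  set h1 := restr T₁ h
  set hr := restr R h
  have hdec : h = (h0 + h1) + hr := by
    rw [← restr_add_of_disjoint hd01, ← restr_add_of_disjoint (disjoint_union_left.2 ⟨hd0R, hd1R⟩)]
    ext i
    have : i ∈ T₀ ∪ T₁ ∪ R := by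
      simp only [hR, mem_union, mem_sdiff, mem_compl]; tauto
    simp only [restr, this, if_true]
  have hk' : (0 : ℝ) < k := Nat.cast_pos.2 hk
  have hsk : 0 < √(k : ℝ) := Real.sqrt_pos.2 hk'
  have hsq : √(k : ℝ) * √k = k := Real.mul_self_sqrt hk'.le
  have hpyth : norm2 (h0 + h1) ^ 2 = norm2 h0 ^ 2 + norm2 h1 ^ 2 := by
    rw [← restr_add_of_disjoint hd01, norm2_restr_sq, norm2_restr_sq, norm2_restr_sq,
      sum_union hd01]
  have hpyth' : norm2 h ^ 2 = norm2 (h0 + h1) ^ 2 + norm2 hr ^ 2 := by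
    have : (h0 + h1) ⬝ᵥ hr = 0 := by
      rw [add_dotProduct]
      simp only [dotProduct, h0, h1, hr, restr_mul_restr hd0R, restr_mul_restr hd1R,
        sum_const_zero, add_zero]
    have h2 := norm2_add_smul_sq (h0 + h1) hr 1
    rw [one_smul, ← hdec, this] at h2
    linarith
  -- `‖h‖₁ ≤ √k ‖h‖₂` on `T₀`
  have hl1 : ∑ i ∈ T₀, |h i| ≤ √k * norm2 h0 := by
    refine le_of_sq_le ?_ (mul_nonneg hsk.le (norm2_nonneg _))
    rw [mul_pow, norm2_restr_sq, sq √(k : ℝ), hsq]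
    refine (sq_sum_le_card_mul_sum_sq (s := T₀) (f := fun i => |h i|)).trans ?_
    simp only [sq_abs]
    gcongr
  have hn0 := norm2_nonneg h0
  have hn1 := norm2_nonneg h1
  have hn01 := norm2_nonneg (h0 + h1)
  have hR0 : 0 ≤ ∑ i ∈ R, |h i| := sum_nonneg fun i _ => abs_nonneg _
  have hT0 : 0 ≤ ∑ i ∈ T₁, |h i| := sum_nonneg fun i _ => abs_nonneg _
  have h0le : norm2 h0 ≤ norm2 (h0 + h1) :=
    le_of_sq_le (by nlinarith) hn01
  have htail : norm2 hr ^ 2 ≤ norm2 h0 ^ 2 := by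
    have e1 : norm2 hr ^ 2 ≤ M * ∑ i ∈ R, |h i| := by
      rw [norm2_restr_sq, mul_sum]
      refine sum_le_sum fun i hi => ?_
      rw [← sq_abs, sq]
      exact mul_le_mul_of_nonneg_right (hrest i hi) (abs_nonneg _)
    have e2 : k * norm2 hr ^ 2 ≤ (∑ i ∈ T₁, |h i|) * ∑ i ∈ R, |h i| := by
      nlinarith [mul_le_mul_of_nonneg_left e1 hk'.le, mul_le_mul_of_nonneg_right hkM hR0]
    have e3 : (∑ i ∈ T₁, |h i|) + ∑ i ∈ R, |h i| ≤ √k * norm2 h0 := by linarith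
    have e4 : ((∑ i ∈ T₁, |h i|) + ∑ i ∈ R, |h i|) ^ 2 ≤ (√k * norm2 h0) ^ 2 :=
      pow_le_pow_left₀ (by positivity) e3 2
    rw [mul_pow, sq √(k : ℝ), hsq] at e4
    have : (k : ℝ) * norm2 hr ^ 2 ≤ k * norm2 h0 ^ 2 := by nlinarith
    exact le_of_mul_le_mul_left this hk'
  -- near-orthogonality of the tail to a block `T` that is disjoint from it
  have hin : ∀ T : Finset (Fin N), T.card ≤ k → Disjoint T R →
      |(A *ᵥ restr T h) ⬝ᵥ (A *ᵥ hr)| ≤ δ * norm2 (restr T h) * norm2 h0 := by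
    intro T hTc hTR
    have e := rip_inner_tail hk hδ₂ hA (sparse_restr h hTc) h R
      (fun i hi => by simp [restr, disjoint_right.1 hTR hi]) M hM hrest
    have e2 : (k : ℝ) * M + ∑ i ∈ R, |h i| ≤ √k * norm2 h0 := by linarith
    have e3 := mul_le_mul_of_nonneg_left e2 (mul_nonneg hδ₂ (norm2_nonneg (restr T h)))
    refine le_of_mul_le_mul_left ((e.trans e3).trans_eq ?_) hsk
    ring
  have hAh : norm2 (A *ᵥ h) ≤ 2 * ε := by
    have : A *ᵥ h = (y - A *ᵥ x) - (y - A *ᵥ z) := by rw [hh, mulVec_sub]; abel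
    rw [this]
    exact norm2_sub_le_two hε hxy hzy
  have hsp : SparseVec (2 * k) (h0 + h1) := by
    rw [← restr_add_of_disjoint hd01]
    refine sparse_restr h ((card_union_le _ _).trans ?_)
    omega
  have hrip := rip_norm2 hA hsp
  set s := √(1 + δ) with hs
  have hs2 : s ^ 2 = 1 + δ := Real.sq_sqrt (by linarith)
  have hs0 : 0 ≤ s := Real.sqrt_nonneg _
  have hup : norm2 (A *ᵥ (h0 + h1)) ≤ s * norm2 (h0 + h1) := by
    refine le_of_sq_le ?_ (by positivity)
    rw [mul_pow, hs2]
    exact hrip.2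
  have hexp : norm2 (A *ᵥ (h0 + h1)) ^ 2 = (A *ᵥ (h0 + h1)) ⬝ᵥ (A *ᵥ h)
      - ((A *ᵥ h0) ⬝ᵥ (A *ᵥ hr) + (A *ᵥ h1) ⬝ᵥ (A *ᵥ hr)) := by
    rw [norm2_sq_dot, ← add_dotProduct, ← mulVec_add, ← dotProduct_sub, ← mulVec_sub]
    conv_rhs => rw [hdec]
    rw [add_sub_cancel_right]
  have hcs : (A *ᵥ (h0 + h1)) ⬝ᵥ (A *ᵥ h) ≤ s * norm2 (h0 + h1) * (2 * ε) :=
    (dot_le_norm2 _ _).trans (mul_le_mul hup hAh (norm2_nonneg _) (by positivity))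
  have hsum : norm2 h0 + norm2 h1 ≤ √2 * norm2 (h0 + h1) := by
    refine le_of_sq_le ?_ (by positivity)
    rw [mul_pow, Real.sq_sqrt (by norm_num), hpyth]
    nlinarith [sq_nonneg (norm2 h0 - norm2 h1)]
  have hi0 := neg_le_of_abs_le (hin T₀ hcard₀ hd0R)
  have hi1 := neg_le_of_abs_le (hin T₁ hcard₁ hd1R)
  have hcross : δ * (norm2 h0 + norm2 h1) * norm2 h0 ≤ δ * (√2 * norm2 (h0 + h1)) *
      norm2 (h0 + h1) := by gcongr
  have hmain : norm2 (h0 + h1) * ((1 - (1 + √2) * δ) * norm2 (h0 + h1)) ≤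
      norm2 (h0 + h1) * (2 * s * ε) := by
    have hlow := hrip.1
    rw [hexp] at hlow
    have e1 : δ * norm2 h0 * norm2 h0 + δ * norm2 h1 * norm2 h0 ≤
        √2 * δ * norm2 (h0 + h1) ^ 2 := by linarith
    have e2 : (1 - δ) * norm2 (h0 + h1) ^ 2 ≤
        s * norm2 (h0 + h1) * (2 * ε) + √2 * δ * norm2 (h0 + h1) ^ 2 := by linarith
    linarith
  have hfin : (1 - (1 + √2) * δ) * norm2 (h0 + h1) ≤ 2 * s * ε := by
    rcases hn01.eq_or_lt with h' | h'
    · rw [← h', mul_zero]; positivity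
    · exact le_of_mul_le_mul_left hmain h'
  have htot : norm2 h ≤ 2 * norm2 (h0 + h1) := by
    refine le_of_sq_le ?_ (by positivity)
    have e1 := sq_nonneg (norm2 h1)
    have e2 := sq_nonneg (norm2 (h0 + h1))
    rw [mul_pow]
    linarith
  rw [div_mul_eq_mul_div, le_div_iff₀ hD]
  have e := mul_le_mul_of_nonneg_right htot hD.le
  linarith

/-! ### Rows and columns of matrices -/

lemma normF_le_of_rows {p q : ℕ} (W : Matrix (Fin p) (Fin q) ℝ) {c : ℝ} (hc : 0 ≤ c)
    (h : ∀ j, norm2 (W j) ≤ c) : normF W ≤ √p * c := by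
  unfold normF
  rw [Real.sqrt_le_left (by positivity), mul_pow, Real.sq_sqrt (Nat.cast_nonneg p)]
  calc ∑ j, ∑ t, W j t ^ 2 ≤ (univ : Finset (Fin p)).card • c ^ 2 :=
        sum_le_card_nsmul _ _ _ fun j _ => by
          rw [← norm2_sq]; exact pow_le_pow_left₀ (norm2_nonneg _) (h j) 2
    _ = p * c ^ 2 := by simp

lemma normF_transpose {p q : ℕ} (W : Matrix (Fin p) (Fin q) ℝ) : normF Wᵀ = normF W := by
  unfold normF
  rw [sum_comm]
  rfl

lemma norm2_row_le {p q : ℕ} (W : Matrix (Fin p) (Fin q) ℝ) (j : Fin p) :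
    norm2 (W j) ≤ normF W :=
  Real.sqrt_le_sqrt (single_le_sum (f := fun j => ∑ t, W j t ^ 2)
    (fun _ _ => sum_nonneg fun _ _ => sq_nonneg _) (mem_univ j))

lemma sparse_row {N₁ N₂ k : ℕ} {X : Matrix (Fin N₁) (Fin N₂) ℝ} (hX : SparseMat k X) (j : Fin N₁) :
    SparseVec k (X j) := by
  refine le_trans ?_ hX
  refine card_le_card_of_injOn (fun t => (j, t)) (fun t ht => by simpa using ht) ?_
  intro a _ b _ hab
  simpa using hab

/-- Left-multiplying a vector by a `k`-sparse matrix produces a `k`-sparse vector: it vanishes at the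
indices of zero rows. -/
lemma sparse_mulVec {N₁ N₂ k : ℕ} {X : Matrix (Fin N₁) (Fin N₂) ℝ} (hX : SparseMat k X)
    (w : Fin N₂ → ℝ) : SparseVec k (X *ᵥ w) := by
  have hsub : (univ.filter fun i => (X *ᵥ w) i ≠ 0) ⊆
      (univ.filter fun p : Fin N₁ × Fin N₂ => X p.1 p.2 ≠ 0).image Prod.fst := by
    intro i hi
    have hne : ∑ t, X i t * w t ≠ 0 := (mem_filter.1 hi).2
    obtain ⟨t, -, ht⟩ := exists_ne_zero_of_sum_ne_zero hne
    exact mem_image.2 ⟨(i, t), mem_filter.2 ⟨mem_univ _, left_ne_zero_of_mul ht⟩, rfl⟩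
  exact ((card_le_card hsub).trans card_image_le).trans hX

theorem stmt_9 {m₁ m₂ N₁ N₂ k : ℕ} (δ ε : ℝ)
    (hδ₀ : 0 < δ) (hδ₁ : δ < Real.sqrt 2 - 1) (hε : 0 ≤ ε)
    (X : Matrix (Fin N₁) (Fin N₂) ℝ) (hX : SparseMat k X)
    (U₁ : Matrix (Fin m₁) (Fin N₁) ℝ) (U₂ : Matrix (Fin m₂) (Fin N₂) ℝ)
    (hU₁ : RIP (2 * k) δ U₁) (hU₂ : RIP (2 * k) δ U₂)
    (C₂ : ℝ) (hC₂ : C₂ = 4 * Real.sqrt (1 + δ) / (1 - (1 + Real.sqrt 2) * δ))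
    (E Y : Matrix (Fin m₁) (Fin m₂) ℝ) (hE : normF E ≤ ε)
    (hY : Y = U₁ * X * U₂ᵀ + E)
    (zhat : Fin m₂ → Fin N₁ → ℝ)
    (hzfeas : ∀ i, norm2 ((fun p => Y p i) - U₁.mulVec (zhat i)) ≤ ε)
    (hzmin : ∀ i, ∀ z : Fin N₁ → ℝ, norm2 ((fun p => Y p i) - U₁.mulVec z) ≤ ε →
      (∑ t, |zhat i t|) ≤ (∑ t, |z t|))
    (Z : Matrix (Fin N₁) (Fin m₂) ℝ) (hZ : ∀ p i, Z p i = zhat i p)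
    (uhat : Fin N₁ → Fin N₂ → ℝ)
    (hufeas : ∀ j, norm2 (Z j - U₂.mulVec (uhat j)) ≤ Real.sqrt (m₂ : ℝ) * C₂ * ε)
    (humin : ∀ j, ∀ u : Fin N₂ → ℝ,
      norm2 (Z j - U₂.mulVec u) ≤ Real.sqrt (m₂ : ℝ) * C₂ * ε →
      (∑ t, |uhat j t|) ≤ (∑ t, |u t|))
    (Xhat : Matrix (Fin N₁) (Fin N₂) ℝ) (hXhat : ∀ j t, Xhat j t = uhat j t) :
    normF (Z - X * U₂ᵀ) ≤ Real.sqrt (m₂ : ℝ) * C₂ * ε ∧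
    normF (Xhat - X) ≤ Real.sqrt ((m₂ : ℝ) * (N₁ : ℝ)) * C₂ ^ 2 * ε := by
  have hD := denom_pos hδ₁
  have hC : 0 ≤ C₂ := by rw [hC₂]; positivity
  have hcol : ∀ i, norm2 ((Z - X * U₂ᵀ)ᵀ i) ≤ C₂ * ε := by
    intro i
    have hx : norm2 ((fun p => Y p i) - U₁ *ᵥ (X *ᵥ U₂ i)) ≤ ε := by
      have he : (fun p => Y p i) - U₁ *ᵥ (X *ᵥ U₂ i) = Eᵀ i := by
        ext p
        have : (U₁ * X * U₂ᵀ) p i = (U₁ *ᵥ (X *ᵥ U₂ i)) p := by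
          rw [mulVec_mulVec]; rfl
        simp [hY, this]
      rw [he]
      exact (norm2_row_le Eᵀ i).trans (by rwa [normF_transpose])
    have he : (Z - X * U₂ᵀ)ᵀ i = zhat i - X *ᵥ U₂ i := by
      ext p
      simp only [transpose_apply, Matrix.sub_apply, hZ, Pi.sub_apply]
      rfl
    rw [he, hC₂]
    exact stable_recovery hδ₀ hδ₁ hε hU₁ (sparse_mulVec hX _) hx (hzfeas i) (hzmin i _ hx)
  have hfirst : normF (Z - X * U₂ᵀ) ≤ √(m₂ : ℝ) * C₂ * ε := by
    rw [← normF_transpose, mul_assoc]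
    exact normF_le_of_rows _ (by positivity) hcol
  refine ⟨hfirst, ?_⟩
  have hrow : ∀ j, norm2 ((Xhat - X) j) ≤ C₂ * (√(m₂ : ℝ) * C₂ * ε) := by
    intro j
    have hx : norm2 (Z j - U₂ *ᵥ X j) ≤ √(m₂ : ℝ) * C₂ * ε := by
      have he : Z j - U₂ *ᵥ X j = (Z - X * U₂ᵀ) j := by
        ext i
        simp [mul_apply, mulVec, dotProduct, mul_comm]
      rw [he]
      exact (norm2_row_le _ j).trans hfirst
    have he : (Xhat - X) j = uhat j - X j := by
      ext t
      simp [hXhat]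
    rw [he]
    nth_rewrite 1 [hC₂]
    exact stable_recovery hδ₀ hδ₁ (by positivity) hU₂ (sparse_row hX j) hx (hufeas j)
      (humin j _ hx)
  refine (normF_le_of_rows _ (by positivity) hrow).trans_eq ?_
  rw [Real.sqrt_mul (Nat.cast_nonneg m₂)]
  ring
end

section
/- (GTCS-P, noiseless parallelizable recovery for tensors.) Let 𝒳 ∈ ℝ^{N₁×⋯×N_d} be a k-sparse order-d tensor, let U_j ∈ ℝ^{m_j×N_j} satisfy the null space property of order k (NSP_k), with k ≤ N_j for each j ∈ {1,…,d}, and set 𝒴 = 𝒳 ×₁ U₁ ×₂ U₂ ⋯ ×_d U_d. Suppose 𝒴 = Σ_{i=1}^K b_i^{(1)} ∘ ⋯ ∘ b_i^{(d)} where each b_i^{(j)} ∈ U_j R_j(𝒳) (the image under U_j of the span of the mode-j fibers of 𝒳). Then for each i ∈ {1,…,K} and j ∈ {1,…,d} there exists a unique k-sparse vector ŵ_i^{(j)} ∈ R_j(𝒳) with U_j ŵ_i^{(j)} = b_i^{(j)}, and 𝒳 = Σ_{i=1}^K ŵ_i^{(1)} ∘ ⋯ ∘ ŵ_i^{(d)}.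 -/
/-!
Every vector of `R_j(𝒳)` is supported on the projection `S_j` of the support of `𝒳` to the `j`-th
coordinate, and `|S_j| ≤ k`. A nonzero kernel vector of a matrix with `NSP_k` cannot be supported
on `k` indices, so `U_j` is injective on vectors supported on `S_j` and has a linear left inverse
`V_j` there (`exists_leftInverse_on`). This gives existence and uniqueness of
`ŵ_i^{(j)} = V_j b_i^{(j)}`.

Since `𝒳` is supported on `∏ S_j`, applying `V_1, …, V_d` to all modes undoes `U_1, …, U_d`
(`modeProd_modeProd` and `modeProd_eq_self`). Applied to `∑ᵢ b_i^{(1)} ∘ ⋯ ∘ b_i^{(d)}`, the same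
operation gives `∑ᵢ V_1 b_i^{(1)} ∘ ⋯ ∘ V_d b_i^{(d)}` (`modeProd_sum_outer`), which is the claimed
decomposition.
-/

open Matrix Finset

/-- `A` satisfies the null space property of order `k`. -/
def NSP {m N : ℕ} (k : ℕ) (A : Matrix (Fin m) (Fin N) ℝ) : Prop :=
  ∀ w : Fin N → ℝ, w ≠ 0 → A.mulVec w = 0 →
    ∀ S : Finset (Fin N), S.card = k →
      ∑ i ∈ S, |w i| < ∑ i ∈ Sᶜ, |w i|

/-- An order-`d` tensor is `k`-sparse if it has at most `k` nonzero entries in total. -/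
def SparseTensor {d : ℕ} {N : Fin d → ℕ} (k : ℕ)
    (X : ((j : Fin d) → Fin (N j)) → ℝ) : Prop :=
  (Finset.univ.filter fun i => X i ≠ 0).card ≤ k

/-- The mode product `𝒳 ×₁ U₁ ×₂ U₂ ⋯ ×_d U_d` of an order-`d` tensor with matrices. -/
def modeProd {d : ℕ} {N m : Fin d → ℕ} (X : ((j : Fin d) → Fin (N j)) → ℝ)
    (U : (j : Fin d) → Matrix (Fin (m j)) (Fin (N j)) ℝ) :
    ((j : Fin d) → Fin (m j)) → ℝ :=
  fun p => ∑ i : (j : Fin d) → Fin (N j), X i * ∏ j, U j (p j) (i j)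

/-- The mode-`j` fiber of a tensor obtained by fixing all indices except the `j`-th. -/
def fiber {d : ℕ} {N : Fin d → ℕ} (X : ((j : Fin d) → Fin (N j)) → ℝ)
    (j : Fin d) (i : (l : Fin d) → Fin (N l)) : Fin (N j) → ℝ :=
  fun t => X (Function.update i j t)

/-- `R_j(𝒳)`: the span of the mode-`j` fibers of `𝒳`. -/
def fiberSpan {d : ℕ} {N : Fin d → ℕ} (j : Fin d)
    (X : ((j : Fin d) → Fin (N j)) → ℝ) : Submodule ℝ (Fin (N j) → ℝ) :=
  Submodule.span ℝ (Set.range (fiber X j))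

/-- The projection of the support of a tensor to its `j`-th coordinate. -/
noncomputable def modeSupport {d : ℕ} {N : Fin d → ℕ} (j : Fin d)
    (X : ((j : Fin d) → Fin (N j)) → ℝ) : Finset (Fin (N j)) :=
  (Finset.univ.filter fun i => X i ≠ 0).image fun i => i j

lemma card_modeSupport_le {d k : ℕ} {N : Fin d → ℕ} (j : Fin d)
    {X : ((j : Fin d) → Fin (N j)) → ℝ} (hX : SparseTensor k X) :
    (modeSupport j X).card ≤ k :=
  Finset.card_image_le.trans hX

lemma mem_modeSupport {d : ℕ} {N : Fin d → ℕ} (j : Fin d)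
    {X : ((j : Fin d) → Fin (N j)) → ℝ} {i : (j : Fin d) → Fin (N j)} (h : X i ≠ 0) :
    i j ∈ modeSupport j X :=
  Finset.mem_image_of_mem _ (by simpa using h)

lemma eq_zero_of_mem_fiberSpan {d : ℕ} {N : Fin d → ℕ} (j : Fin d)
    {X : ((j : Fin d) → Fin (N j)) → ℝ} {v : Fin (N j) → ℝ} (hv : v ∈ fiberSpan j X)
    {t : Fin (N j)} (ht : t ∉ modeSupport j X) : v t = 0 := by
  induction hv using Submodule.span_induction with
  | mem x hx =>
    obtain ⟨i, rfl⟩ := hx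
    by_contra h
    exact ht (by simpa using mem_modeSupport j h)
  | zero => rfl
  | add x y _ _ hx hy => simp [hx, hy]
  | smul a x _ hx => simp [hx]

lemma sparseVec_of_support {N k : ℕ} {S : Finset (Fin N)} (hS : S.card ≤ k) {v : Fin N → ℝ}
    (hv : ∀ t ∉ S, v t = 0) : SparseVec k v := by
  refine (Finset.card_le_card fun t ht => ?_).trans hS
  by_contra h
  exact (Finset.mem_filter.1 ht).2 (hv t h)

lemma NSP.eq_zero {m N k : ℕ} {A : Matrix (Fin m) (Fin N) ℝ} (hA : NSP k A) (hk : k ≤ N)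
    {S : Finset (Fin N)} (hS : S.card ≤ k) {w : Fin N → ℝ} (hw : ∀ t ∉ S, w t = 0)
    (h : A.mulVec w = 0) : w = 0 := by
  by_contra h0
  -- `NSP` only speaks of sets of exactly `k` indices.
  obtain ⟨T, hST, hT⟩ := Finset.exists_superset_card_eq hS (by simpa using hk)
  have h1 := hA w h0 h T hT
  have h2 : ∑ i ∈ Tᶜ, |w i| = 0 := Finset.sum_eq_zero fun i hi => by
    rw [hw i fun hiS => (Finset.mem_compl.1 hi) (hST hiS), abs_zero]
  have h3 : 0 ≤ ∑ i ∈ T, |w i| := Finset.sum_nonneg fun i _ => abs_nonneg _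
  linarith

/-- A matrix with the null space property of order `k` has a left inverse on the space of vectors
supported on a given set of at most `k` indices. -/
lemma exists_leftInverse_on {m N k : ℕ} {A : Matrix (Fin m) (Fin N) ℝ} (hA : NSP k A)
    (hk : k ≤ N) {S : Finset (Fin N)} (hS : S.card ≤ k) :
    ∃ V : Matrix (Fin N) (Fin m) ℝ,
      ∀ v : Fin N → ℝ, (∀ t ∉ S, v t = 0) → V.mulVec (A.mulVec v) = v := by
  let P : Submodule ℝ (Fin N → ℝ) :=
    { carrier := {v | ∀ t ∉ S, v t = 0}
      add_mem' := fun {a b} ha hb t ht => by simp [ha t ht, hb t ht]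
      zero_mem' := fun t _ => rfl
      smul_mem' := fun c a ha t ht => by simp [ha t ht] }
  have hinj : LinearMap.ker (A.mulVecLin ∘ₗ P.subtype) = ⊥ := by
    rw [LinearMap.ker_eq_bot']
    intro v hv
    exact Subtype.ext (hA.eq_zero hk hS v.2 (by simpa using hv))
  obtain ⟨g, hg⟩ := LinearMap.exists_leftInverse_of_injective _ hinj
  refine ⟨LinearMap.toMatrix' (P.subtype ∘ₗ g), fun v hv => ?_⟩
  have h := congrArg Subtype.val (LinearMap.congr_fun hg ⟨v, hv⟩)
  rw [LinearMap.toMatrix'_mulVec]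
  simpa using h

lemma modeProd_modeProd {d : ℕ} {N m n : Fin d → ℕ} (X : ((j : Fin d) → Fin (N j)) → ℝ)
    (U : (j : Fin d) → Matrix (Fin (m j)) (Fin (N j)) ℝ)
    (V : (j : Fin d) → Matrix (Fin (n j)) (Fin (m j)) ℝ) :
    modeProd (modeProd X U) V = modeProd X fun j => V j * U j := by
  funext q
  simp only [modeProd, Finset.sum_mul, Matrix.mul_apply]
  rw [Finset.sum_comm]
  refine Finset.sum_congr rfl fun i _ => ?_
  rw [Finset.prod_univ_sum, Fintype.piFinset_univ, Finset.mul_sum]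
  refine Finset.sum_congr rfl fun p _ => ?_
  rw [Finset.prod_mul_distrib]
  ring

lemma modeProd_sum_outer {d K : ℕ} {m n : Fin d → ℕ} (b : Fin K → (j : Fin d) → Fin (m j) → ℝ)
    (V : (j : Fin d) → Matrix (Fin (n j)) (Fin (m j)) ℝ) :
    modeProd (fun p => ∑ i, ∏ j, b i j (p j)) V =
      fun q => ∑ i, ∏ j, (V j).mulVec (b i j) (q j) := by
  funext q
  simp only [modeProd, Finset.sum_mul, Matrix.mulVec, dotProduct]
  rw [Finset.sum_comm]
  refine Finset.sum_congr rfl fun i _ => ?_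
  rw [Finset.prod_univ_sum, Fintype.piFinset_univ]
  refine Finset.sum_congr rfl fun p _ => ?_
  rw [Finset.prod_mul_distrib, mul_comm]

/-- Matrices whose columns indexed by the mode supports of `X` are those of the identity leave `X`
unchanged. -/
lemma modeProd_eq_self {d : ℕ} {N : Fin d → ℕ} (X : ((j : Fin d) → Fin (N j)) → ℝ)
    (W : (j : Fin d) → Matrix (Fin (N j)) (Fin (N j)) ℝ)
    (hW : ∀ j, ∀ t ∈ modeSupport j X, ∀ s, W j s t = (1 : Matrix _ _ ℝ) s t) :
    modeProd X W = X := by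
  funext q
  rw [modeProd, Finset.sum_eq_single q]
  · by_cases h : X q = 0
    · simp [h]
    · rw [Finset.prod_eq_one, mul_one]
      intro j _
      rw [hW j _ (mem_modeSupport j h), Matrix.one_apply_eq]
  · intro i _ hi
    by_cases h : X i = 0
    · simp [h]
    · obtain ⟨j, hj⟩ := Function.ne_iff.1 hi
      rw [Finset.prod_eq_zero (Finset.mem_univ j), mul_zero]
      rw [hW j _ (mem_modeSupport j h), Matrix.one_apply_ne hj.symm]
  · simp

theorem stmt_12 {d k K : ℕ} {N m : Fin d → ℕ} (hk : ∀ j, k ≤ N j)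
    (X : ((j : Fin d) → Fin (N j)) → ℝ) (hX : SparseTensor k X)
    (U : (j : Fin d) → Matrix (Fin (m j)) (Fin (N j)) ℝ) (hU : ∀ j, NSP k (U j))
    (b : Fin K → (j : Fin d) → Fin (m j) → ℝ)
    (hb : ∀ i j, b i j ∈ (fiberSpan j X).map (U j).mulVecLin)
    (hdec : modeProd X U = fun p => ∑ i, ∏ j, b i j (p j)) :
    ∃ w : Fin K → (j : Fin d) → Fin (N j) → ℝ,
      (∀ i j, w i j ∈ fiberSpan j X ∧ SparseVec k (w i j) ∧
        (U j).mulVec (w i j) = b i j ∧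
        ∀ v ∈ fiberSpan j X, SparseVec k v → (U j).mulVec v = b i j → v = w i j) ∧
      X = fun idx => ∑ i, ∏ j, w i j (idx j) := by
  choose V hV using fun j => exists_leftInverse_on (hU j) (hk j) (card_modeSupport_le j hX)
  have hVU : ∀ j, ∀ v ∈ fiberSpan j X, (V j).mulVec ((U j).mulVec v) = v := fun j v hv =>
    hV j v fun t ht => eq_zero_of_mem_fiberSpan j hv ht
  refine ⟨fun i j => (V j).mulVec (b i j), fun i j => ?_, ?_⟩
  · obtain ⟨v, hv, hvb⟩ := hb i j
    rw [Matrix.mulVecLin_apply] at hvb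
    have hw : (V j).mulVec (b i j) = v := by rw [← hvb, hVU j v hv]
    simp only [hw]
    refine ⟨hv, sparseVec_of_support (card_modeSupport_le j hX)
      fun t ht => eq_zero_of_mem_fiberSpan j hv ht, hvb, fun u hu _ hub => ?_⟩
    rw [← hw, ← hub, hVU j u hu]
  · rw [← modeProd_sum_outer, ← hdec, modeProd_modeProd, modeProd_eq_self]
    intro j t ht s
    have h := congrFun (hV j (Pi.single t 1) fun r hr =>
      Pi.single_eq_of_ne (ne_of_mem_of_not_mem ht hr).symm 1) s
    rw [Matrix.mulVec_mulVec, Matrix.mulVec_single_one] at h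
    simpa [Matrix.one_apply, Pi.single_apply] using h
end
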